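/- Let a be a non-zero squarefree integer and n a non-zero integer. If the equation x² − a y² = n has a solution with x, y in Q_p for every prime p and a solution with x, y in R, then it has a solution with x, y in Q. -/

import Mathlib

/-- The form `x² - a y² - b z²` is isotropic over `K`. -/
def Iso16 (K : Type) [Field K] (a b : ℤ) : Prop :=
  ∃ x y z : K, ¬ (x = 0 ∧ y = 0 ∧ z = 0) ∧ x ^ 2 = (a : K) * y ^ 2 + (b : K) * z ^ 2

theorem Iso16.symm {K : Type} [Field K] {a b : ℤ} (h : Iso16 K a b) : Iso16 K b a := by
  obtain ⟨x, y, z, h0, h⟩ := h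
  exact ⟨x, z, y, by tauto, by rw [h]; ring⟩

theorem Iso16.step {K : Type} [Field K] [CharZero K] {a b b' t : ℤ} (hb : b ≠ 0)
    (ht : t ^ 2 = a + b * b') (h : Iso16 K a b) : Iso16 K a b' := by
  obtain ⟨x, y, z, h0, h⟩ := h
  have hbK : (b : K) ≠ 0 := by exact_mod_cast hb
  have htK : (t : K) ^ 2 = a + b * b' := by exact_mod_cast congrArg (Int.cast : ℤ → K) ht
  by_cases hz : z = 0
  · subst hz
    exact ⟨x, y, 0, h0, by rw [h]; ring⟩
  · refine ⟨x * t + a * y, x + t * y, b * z, ?_, ?_⟩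
    · rintro ⟨-, -, h3⟩
      exact (mul_ne_zero hbK hz) h3
    · linear_combination (t ^ 2 - a : K) * h + (b * z ^ 2 : K) * htK

theorem Iso16.sq {K : Type} [Field K] [CharZero K] {a c u : ℤ} (hu : u ≠ 0) :
    Iso16 K a (u * u * c) ↔ Iso16 K a c := by
  have huK : (u : K) ≠ 0 := by exact_mod_cast hu
  constructor
  · rintro ⟨x, y, z, h0, h⟩
    refine ⟨x, y, u * z, ?_, ?_⟩
    · simpa [huK] using h0
    · rw [h]; push_cast; ring
  · rintro ⟨x, y, z, h0, h⟩
    refine ⟨x, y, z / u, ?_, ?_⟩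
    · simpa [huK] using h0
    · rw [h]; push_cast; field_simp

theorem parity16 {p : ℕ} [Fact p.Prime] {b x z : ℚ_[p]} (hb : b.valuation = 1) (hz : z ≠ 0)
    (h : ‖x ^ 2‖ = ‖b * z ^ 2‖) : False := by
  have hb0 : b ≠ 0 := by
    rintro rfl
    simp at hb
  have hbz : b * z ^ 2 ≠ 0 := mul_ne_zero hb0 (pow_ne_zero _ hz)
  have hx2 : x ^ 2 ≠ 0 := by
    rw [← norm_ne_zero_iff, h, norm_ne_zero_iff]; exact hbz
  have hp : 1 < (p : ℝ) := by exact_mod_cast (Fact.out : p.Prime).one_lt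
  rw [Padic.norm_eq_zpow_neg_valuation hx2, Padic.norm_eq_zpow_neg_valuation hbz] at h
  have h2 := zpow_right_injective₀ (by linarith) (by linarith) h
  rw [Padic.valuation_mul hb0 (pow_ne_zero _ hz), Padic.valuation_pow, Padic.valuation_pow, hb] at h2
  push_cast at h2
  omega

theorem local16 {p : ℕ} [Fact p.Prime] {a b : ℤ} (hb : Squarefree b) (hpb : (p : ℤ) ∣ b)
    (h : Iso16 ℚ_[p] a b) : ∃ t : ℤ, (p : ℤ) ∣ t ^ 2 - a := by
  by_cases hpa : (p : ℤ) ∣ a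
  · exact ⟨0, by simpa using hpa⟩
  have hpp : p.Prime := Fact.out
  have hval : (b : ℚ_[p]).valuation = 1 := by
    obtain ⟨c, rfl⟩ := hpb
    have hc : ¬ (p : ℤ) ∣ c := by
      intro hd
      have := hb p (mul_dvd_mul_left _ hd)
      rw [Int.isUnit_iff] at this
      have := hpp.one_lt
      omega
    have hc0 : c ≠ 0 := by rintro rfl; simp at hc
    have hp0 : (p : ℚ_[p]) ≠ 0 := by exact_mod_cast hpp.ne_zero
    have hcK : (c : ℚ_[p]) ≠ 0 := by exact_mod_cast hc0
    push_cast
    rw [Padic.valuation_mul hp0 hcK, Padic.valuation_p, Padic.valuation_intCast,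
      padicValInt.eq_zero_of_not_dvd hc]
    simp
  have hna : ‖(a : ℚ_[p])‖ = 1 := by
    have h1 := Padic.norm_int_le_one (p := p) a
    have h2 := mt (Padic.norm_intCast_lt_one_iff (p := p) (k := a)).1 hpa
    linarith [not_lt.1 h2]
  obtain ⟨x, y, z, h0, h⟩ := h
  have hb0 : (b : ℚ_[p]) ≠ 0 := by
    intro h; rw [h] at hval; simp at hval
  have hy : y ≠ 0 := by
    rintro rfl
    by_cases hz : z = 0
    · subst hz
      apply h0
      simpa using h
    · exact parity16 (x := x) hval hz (by rw [h]; simp)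
  -- normalise `y = 1`
  obtain ⟨X, Z, hX⟩ : ∃ X Z : ℚ_[p], X ^ 2 = a + b * Z ^ 2 :=
    ⟨x / y, z / y, by field_simp; rw [h]; ring⟩
  have hlt : ‖(b : ℚ_[p]) * Z ^ 2‖ < 1 := by
    by_cases hZ : Z = 0
    · simp [hZ]
    by_contra hge
    rcases (not_lt.1 hge).eq_or_lt with he | hgt
    · exact parity16 (x := 1) hval hZ (by simpa using he)
    · refine parity16 (x := X) hval hZ ?_
      rw [hX, Padic.add_eq_max_of_ne (by rw [hna]; exact hgt.ne), hna]
      exact max_eq_right hgt.le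
  have hXn : ‖X‖ ≤ 1 := by
    have : ‖X ^ 2‖ ≤ 1 := by
      rw [hX]
      exact (Padic.nonarchimedean _ _).trans (max_le hna.le hlt.le)
    rw [norm_pow] at this
    nlinarith [norm_nonneg X]
  let W : ℤ_[p] := ⟨X, hXn⟩
  have hW : W ^ 2 - (a : ℤ_[p]) ∈ IsLocalRing.maximalIdeal ℤ_[p] := by
    rw [IsLocalRing.mem_maximalIdeal, PadicInt.mem_nonunits]
    have : ‖X ^ 2 - a‖ < 1 := by rw [hX]; simpa using hlt
    rw [PadicInt.norm_def]
    push_cast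
    exact this
  rw [← PadicInt.ker_toZMod, RingHom.mem_ker] at hW
  obtain ⟨t, ht⟩ := ZMod.intCast_surjective (PadicInt.toZMod W)
  refine ⟨t, ?_⟩
  rw [← ZMod.intCast_zmod_eq_zero_iff_dvd]
  push_cast
  rw [ht]
  simpa using hW

theorem crt16 (a : ℤ) (n : ℕ) : Squarefree n →
    (∀ p : ℕ, p.Prime → p ∣ n → ∃ t : ℤ, (p : ℤ) ∣ t ^ 2 - a) → ∃ t : ℤ, (n : ℤ) ∣ t ^ 2 - a := by
  induction n using induction_on_primes with
  | zero => intro h; simp at h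
  | one => intro _ _; exact ⟨0, by simp⟩
  | prime_mul p m hp ih =>
    intro hsq H
    obtain ⟨t1, h1⟩ := H p hp (dvd_mul_right _ _)
    obtain ⟨t2, h2⟩ := ih (hsq.of_mul_right) (fun q hq hd => H q hq (hd.mul_left _))
    have hcop : IsCoprime (p : ℤ) (m : ℤ) :=
      Nat.isCoprime_iff_coprime.2 (Nat.coprime_of_squarefree_mul hsq)
    obtain ⟨u, v, huv⟩ := id hcop
    refine ⟨t1 * (v * m) + t2 * (u * p), ?_⟩
    push_cast
    apply hcop.mul_dvd
    · have : (t1 * (v * m) + t2 * (u * p)) = t1 + p * (u * (t2 - t1)) := by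
        linear_combination t1 * huv
      rw [this]
      have e : (t1 + p * (u * (t2 - t1))) ^ 2 - a = (t1 ^ 2 - a) +
        p * (2 * t1 * (u * (t2 - t1)) + p * (u * (t2 - t1)) ^ 2) := by ring
      rw [e]
      exact dvd_add h1 (dvd_mul_right _ _)
    · have : (t1 * (v * m) + t2 * (u * p)) = t2 + m * (v * (t1 - t2)) := by
        linear_combination t2 * huv
      rw [this]
      have e : (t2 + m * (v * (t1 - t2))) ^ 2 - a = (t2 ^ 2 - a) +
        m * (2 * t2 * (v * (t1 - t2)) + m * (v * (t1 - t2)) ^ 2) := by ring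
      rw [e]
      exact dvd_add h2 (dvd_mul_right _ _)

theorem small16 (a b : ℤ) (hb : b ≠ 0) (h : ∃ t : ℤ, b ∣ t ^ 2 - a) :
    ∃ t b' : ℤ, t ^ 2 = a + b * b' ∧ 2 * |t| ≤ |b| := by
  obtain ⟨t, ht⟩ := h
  have hbp : 0 < b.natAbs := Int.natAbs_pos.2 hb
  have hd : b ∣ Int.bmod t b.natAbs - t := by
    have := Int.bmod_emod (x := t) (m := b.natAbs)
    have h3 : ((b.natAbs : ℕ) : ℤ) ∣ Int.bmod t b.natAbs - t :=
      Int.ModEq.dvd (Int.ModEq.symm this)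
    exact Int.natAbs_dvd.1 h3
  have hd2 : b ∣ (Int.bmod t b.natAbs) ^ 2 - a := by
    have e : (Int.bmod t b.natAbs) ^ 2 - a =
      (Int.bmod t b.natAbs - t) * (Int.bmod t b.natAbs + t) + (t ^ 2 - a) := by ring
    rw [e]
    exact dvd_add (hd.mul_right _) ht
  obtain ⟨b', hb'⟩ := hd2
  refine ⟨Int.bmod t b.natAbs, b', by linear_combination hb', ?_⟩
  have l1 := Int.le_bmod (x := t) hbp
  have l2 := Int.bmod_le (x := t) hbp
  rw [Int.abs_eq_natAbs b]
  rcases abs_cases (Int.bmod t b.natAbs) with ⟨h, _⟩ | ⟨h, _⟩ <;> rw [h] <;> omega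

theorem main16 (N : ℕ) : ∀ a b : ℤ, a.natAbs + b.natAbs = N → a ≠ 0 → b ≠ 0 →
    (∀ (p : ℕ) [Fact p.Prime], Iso16 ℚ_[p] a b) → Iso16 ℝ a b → Iso16 ℚ a b := by
  induction N using Nat.strong_induction_on with
  | _ N IH =>
  have key : ∀ a b : ℤ, a.natAbs + b.natAbs = N → a.natAbs ≤ b.natAbs → a ≠ 0 → b ≠ 0 →
      (∀ (p : ℕ) [Fact p.Prime], Iso16 ℚ_[p] a b) → Iso16 ℝ a b → Iso16 ℚ a b := by
    intro a b hN hab ha hb hl hr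
    by_cases hb1 : b.natAbs = 1
    · have ha1 : a.natAbs = 1 := by omega
      rcases Int.natAbs_eq_iff.1 hb1 with rfl | rfl
      · exact ⟨1, 0, 1, by simp, by simp⟩
      rcases Int.natAbs_eq_iff.1 ha1 with rfl | rfl
      · exact ⟨1, 1, 0, by simp, by simp⟩
      exfalso
      obtain ⟨x, y, z, h0, h⟩ := hr
      push_cast at h
      apply h0
      refine ⟨?_, ?_, ?_⟩ <;> apply pow_eq_zero_iff (two_ne_zero) |>.1 <;>
        nlinarith [sq_nonneg x, sq_nonneg y, sq_nonneg z]
    by_cases hsq : Squarefree b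
    · have hex : ∃ t : ℤ, b ∣ t ^ 2 - a := by
        obtain ⟨t, ht⟩ := crt16 a b.natAbs (Int.squarefree_natAbs.2 hsq) (by
          intro p hp hd
          haveI : Fact p.Prime := ⟨hp⟩
          exact local16 hsq (Int.natCast_dvd.2 hd) (hl p))
        exact ⟨t, Int.natAbs_dvd.1 ht⟩
      obtain ⟨t, b', ht, hle⟩ := small16 a b hb hex
      by_cases hb' : b' = 0
      · subst hb'
        have h' : t ^ 2 = a := by simpa using ht
        refine ⟨t, 1, 0, by simp, ?_⟩
        rw [← h']; push_cast; ring
      have hlt : b'.natAbs < b.natAbs := by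
        zify
        have hab' : |a| ≤ |b| := by zify at hab; exact hab
        have hb2 : 2 ≤ |b| := by
          have : 2 ≤ b.natAbs := by have := Int.natAbs_pos.2 hb; omega
          zify at this; exact this
        have e : |b| * |b'| ≤ |t| ^ 2 + |a| := by
          rw [← abs_mul, ← abs_pow]
          have : b * b' = t ^ 2 - a := by linear_combination -ht
          rw [this]
          exact abs_sub _ _
        by_contra hge
        push Not at hge
        nlinarith [abs_nonneg t, mul_le_mul hle hle (by positivity) (by positivity)]
      have ht' : t ^ 2 = a + b' * b := by rw [ht]; ring
      have := IH _ (by omega : a.natAbs + b'.natAbs < N) a b' rfl ha hb'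
        (fun p _ => (hl p).step hb ht) (hr.step hb ht)
      exact this.step hb' ht'
    · simp only [Squarefree, not_forall] at hsq
      obtain ⟨u, ⟨c, rfl⟩, hu⟩ := hsq
      have hu0 : u ≠ 0 := by rintro rfl; simp at hb
      have hc0 : c ≠ 0 := by rintro rfl; simp at hb
      have hlt : c.natAbs < (u * u * c).natAbs := by
        rw [Int.natAbs_mul, Int.natAbs_mul]
        have h1 : 1 ≤ c.natAbs := Int.natAbs_pos.2 hc0
        have h2 : 1 ≤ u.natAbs := Int.natAbs_pos.2 hu0
        have h3 : u.natAbs ≠ 1 := fun h => hu (Int.isUnit_iff_natAbs_eq.2 h)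
        have h4 : 2 ≤ u.natAbs := by omega
        nlinarith [Nat.mul_le_mul h4 h4]
      exact (Iso16.sq hu0).2 (IH _ (by omega : a.natAbs + c.natAbs < N) a c rfl ha hc0
        (fun p _ => (Iso16.sq hu0).1 (hl p)) ((Iso16.sq hu0).1 hr))
  intro a b hN ha hb hl hr
  rcases le_total a.natAbs b.natAbs with h | h
  · exact key a b hN h ha hb hl hr
  · exact (key b a (by omega) h hb ha (fun p _ => (hl p).symm) hr.symm).symm

theorem stmt_16 (a : ℤ) (ha0 : a ≠ 0) (ha : Squarefree a) (n : ℤ) (hn : n ≠ 0)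
    (hloc : ∀ (p : ℕ) [Fact p.Prime], ∃ x y : ℚ_[p], x ^ 2 - (a : ℚ_[p]) * y ^ 2 = (n : ℚ_[p]))
    (hreal : ∃ x y : ℝ, x ^ 2 - (a : ℝ) * y ^ 2 = (n : ℝ)) :
    ∃ x y : ℚ, x ^ 2 - (a : ℚ) * y ^ 2 = (n : ℚ) := by
  obtain ⟨x, y, z, h0, h⟩ := main16 _ a n rfl ha0 hn
    (fun p _ => by
      obtain ⟨x, y, h⟩ := hloc p
      exact ⟨x, y, 1, by simp, by linear_combination h⟩)
    (by
      obtain ⟨x, y, h⟩ := hreal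
      exact ⟨x, y, 1, by simp, by linear_combination h⟩)
  by_cases hz : z = 0
  · subst hz
    have hx : x ≠ 0 := by
      rintro rfl
      apply h0
      have : (a : ℚ) ≠ 0 := by exact_mod_cast ha0
      simpa [this] using h
    have h' : x ^ 2 = a * y ^ 2 := by linear_combination h
    refine ⟨(n + 1) / 2, (n - 1) / 2 * (y / x), ?_⟩
    have e : (a : ℚ) * ((n - 1) / 2 * (y / x)) ^ 2 = ((n - 1) / 2) ^ 2 := by
      have : (a : ℚ) * ((n - 1) / 2 * (y / x)) ^ 2 = ((n - 1) / 2) ^ 2 * ((a * y ^ 2) / x ^ 2) := by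
        ring
      rw [this, ← h', div_self (pow_ne_zero _ hx), mul_one]
    rw [e]; ring
  · refine ⟨x / z, y / z, ?_⟩
    field_simp
    linear_combination h
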